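/- For a, b ∈ ℝ^p and Σ_1, Σ_2 symmetric positive definite p×p matrices, ‖N(a,Σ_1) - N(b,Σ_2)‖ ≤ C(Σ_1) (‖b - a‖_E + ‖Σ_2 - Σ_1‖_F) for some constant C(Σ_1) depending only on Σ_1, combining the bounds ‖N(a,Σ_1) - N(b,Σ_1)‖ ≤ ‖b-a‖_E ‖Σ_1^{-1/2}‖_F and ‖N(a,Σ_1) - N(b,Σ_2)‖ ≤ ‖N(a,Σ_1) - N(b,Σ_1)‖ + (3/2)‖Σ_1^{-1/2} Σ_2 Σ_1^{-1/2} - I‖_F. -/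

import Mathlib

open MeasureTheory Matrix

/-- Total variation distance between two measures: sup over measurable sets. -/
noncomputable def tvDist {α : Type*} [MeasurableSpace α] (μ ν : Measure α) : ℝ :=
  ⨆ A : {s : Set α // MeasurableSet s}, |(μ A.1).toReal - (ν A.1).toReal|

/-- The p-dimensional Gaussian measure N(a, S), defined by its Lebesgue density. -/
noncomputable def gaussianPi {p : ℕ} (a : Fin p → ℝ) (S : Matrix (Fin p) (Fin p) ℝ) :
    Measure (Fin p → ℝ) :=
  volume.withDensity fun x => ENNReal.ofReal
    ((Real.sqrt ((2 * Real.pi) ^ p * S.det))⁻¹ *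
      Real.exp (-((x - a) ⬝ᵥ S⁻¹.mulVec (x - a)) / 2))

/-- The Frobenius norm of a matrix. -/
noncomputable def frobNorm {p : ℕ} (B : Matrix (Fin p) (Fin p) ℝ) : ℝ :=
  Real.sqrt (∑ i, ∑ j, (B i j) ^ 2)

/-!
Since `1 - exp (-w) ≤ w`, the total variation distance between a probability measure `μ` and
`exp (-w) • μ` is at most `∫ |w| dμ`. For two Gaussian measures `w` is a difference of log
densities; as `log det` and the matrix inverse are differentiable at `Σ₁`, near `Σ₁` it is at most
a constant times `(‖b - a‖ + ‖Σ₂ - Σ₁‖) (1 + ‖x - a‖) ^ 2`, and Gaussian second moments are finite.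
When `‖b - a‖ + ‖Σ₂ - Σ₁‖` is bounded below, the distance being at most `1` suffices.
-/

open ProbabilityTheory WithLp
open scoped Topology Matrix.Norms.Frobenius

section TotalVariation

variable {α : Type*} [MeasurableSpace α] {μ ν : Measure α}

lemma tvDist_le_of_forall_measureReal_sub_le [IsProbabilityMeasure μ] [IsProbabilityMeasure ν]
    {c : ℝ} (h : ∀ A, MeasurableSet A → μ.real A - ν.real A ≤ c) : tvDist μ ν ≤ c := by
  have : Nonempty {s : Set α // MeasurableSet s} := ⟨⟨∅, MeasurableSet.empty⟩⟩
  refine ciSup_le fun ⟨A, hA⟩ => abs_sub_le_iff.mpr ⟨h A hA, ?_⟩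
  have h_compl := h Aᶜ hA.compl
  rw [probReal_compl_eq_one_sub hA, probReal_compl_eq_one_sub hA] at h_compl
  change ν.real A - μ.real A ≤ c
  linarith

lemma tvDist_le_one [IsProbabilityMeasure μ] [IsProbabilityMeasure ν] : tvDist μ ν ≤ 1 :=
  tvDist_le_of_forall_measureReal_sub_le fun _ _ =>
    (sub_le_self _ measureReal_nonneg).trans measureReal_le_one

lemma tvDist_withDensity_exp_neg_le [IsProbabilityMeasure μ] {w : α → ℝ} (hw : Integrable w μ)
    [IsProbabilityMeasure (μ.withDensity fun x => ENNReal.ofReal (Real.exp (-w x)))] :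
    tvDist μ (μ.withDensity fun x => ENNReal.ofReal (Real.exp (-w x))) ≤ ∫ x, |w x| ∂μ := by
  set ν := μ.withDensity fun x => ENNReal.ofReal (Real.exp (-w x))
  have h_exp : Integrable (fun x => Real.exp (-w x)) μ := by
    refine ⟨(Real.continuous_exp.comp_aestronglyMeasurable hw.1.neg), ?_⟩
    rw [hasFiniteIntegral_iff_ofReal (.of_forall fun x => (Real.exp_pos _).le),
      ← setLIntegral_univ, ← withDensity_apply _ .univ]
    exact measure_lt_top ν _
  refine tvDist_le_of_forall_measureReal_sub_le fun A hA => ?_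
  have hνA : ν.real A = ∫ x in A, Real.exp (-w x) ∂μ := by
    rw [integral_eq_lintegral_of_nonneg_ae (.of_forall fun x => (Real.exp_pos _).le)
      h_exp.integrableOn.1, ← withDensity_apply _ hA, measureReal_def]
  calc μ.real A - ν.real A = ∫ x in A, (1 - Real.exp (-w x)) ∂μ := by
        rw [integral_sub (integrable_const 1) h_exp.integrableOn, setIntegral_one_eq_measureReal,
          hνA]
    _ ≤ ∫ x in A, |w x| ∂μ :=
        integral_mono ((integrable_const 1).sub h_exp.integrableOn) hw.abs.integrableOn fun x => by
          linarith [Real.add_one_le_exp (-w x), le_abs_self (w x)]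
    _ ≤ ∫ x, |w x| ∂μ := setIntegral_le_integral hw.abs (.of_forall fun x => abs_nonneg _)

end TotalVariation

section Measure

lemma map_withDensity_comp {α β : Type*} [MeasurableSpace α] [MeasurableSpace β] {μ : Measure α}
    {f : α → β} (hf : Measurable f) {g : β → ENNReal} (hg : Measurable g) :
    (μ.withDensity (g ∘ f)).map f = (μ.map f).withDensity g := by
  ext s hs
  rw [Measure.map_apply hf hs, withDensity_apply _ (hf hs), withDensity_apply _ hs,
    setLIntegral_map hs hg hf]
  rfl

lemma pi_withDensity_ofReal {ι : Type*} [Fintype ι] {α : ι → Type*} [∀ i, MeasurableSpace (α i)]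
    {μ : ∀ i, Measure (α i)} [∀ i, SigmaFinite (μ i)] {f : ∀ i, α i → ℝ}
    (hf : ∀ i, Integrable (f i) (μ i)) (hf_nonneg : ∀ i x, 0 ≤ f i x) :
    Measure.pi (fun i => (μ i).withDensity fun x => ENNReal.ofReal (f i x)) =
      (Measure.pi μ).withDensity fun x => ENNReal.ofReal (∏ i, f i (x i)) := by
  refine Measure.pi_eq fun s hs => ?_
  have h_prod_nonneg (x : ∀ i, α i) : 0 ≤ ∏ i, f i (x i) :=
    Finset.prod_nonneg fun i _ => hf_nonneg i (x i)
  simp_rw [withDensity_apply _ (MeasurableSet.univ_pi hs), withDensity_apply _ (hs _),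
    Measure.restrict_pi_pi]
  rw [← ofReal_integral_eq_lintegral_ofReal
      (Integrable.fintype_prod_dep fun i => (hf i).integrableOn) (.of_forall h_prod_nonneg),
    integral_fintype_prod_eq_prod,
    ENNReal.ofReal_prod_of_nonneg fun i _ => integral_nonneg (hf_nonneg i)]
  exact Finset.prod_congr rfl fun i _ =>
    ofReal_integral_eq_lintegral_ofReal (hf i).integrableOn (.of_forall (hf_nonneg i))

lemma isGaussian_pi {ι : Type*} [Fintype ι] {E : ι → Type*} [∀ i, NormedAddCommGroup (E i)]
    [∀ i, NormedSpace ℝ (E i)] [∀ i, CompleteSpace (E i)] [∀ i, SecondCountableTopology (E i)]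
    [∀ i, MeasurableSpace (E i)] [∀ i, BorelSpace (E i)] (μ : ∀ i, Measure (E i))
    [∀ i, IsGaussian (μ i)] : IsGaussian (Measure.pi μ) := by
  have h_indep : iIndepFun (fun i (x : ∀ i, E i) => x i) (Measure.pi μ) :=
    iIndepFun_pi (X := fun _ x => x) fun _ => aemeasurable_id
  have h_eval (i : ι) : HasGaussianLaw (fun x : ∀ i, E i => x i) (Measure.pi μ) :=
    ⟨by rw [(measurePreserving_eval μ i).map_eq]; infer_instance⟩
  simpa using (h_indep.hasGaussianLaw h_eval).isGaussian_map

end Measure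

section Matrix

variable {n : Type*} [Fintype n]

open scoped MatrixOrder Matrix.Norms.L2Operator in
lemma exists_det_ne_zero_eq_mul_transpose_of_posDef [DecidableEq n] {S : Matrix n n ℝ}
    (hS : S.PosDef) : ∃ L : Matrix n n ℝ, L.det ≠ 0 ∧ S = L * Lᵀ := by
  obtain ⟨L, hL, hSL⟩ := CStarAlgebra.isStrictlyPositive_iff_eq_mul_star_self.mp
    (isStrictlyPositive_iff_posDef.mpr hS)
  refine ⟨L, ((isUnit_iff_isUnit_det L).mp hL).ne_zero, ?_⟩
  rw [hSL, star_eq_conjTranspose, conjTranspose_eq_transpose_of_trivial]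

lemma mulVec_dotProduct_inv_mulVec_mulVec {R : Type*} [CommRing R] [DecidableEq n]
    (S : Matrix n n R) {L : Matrix n n R} (hL : IsUnit L.det) (y : n → R) :
    (L *ᵥ y) ⬝ᵥ (L * S * Lᵀ)⁻¹ *ᵥ (L *ᵥ y) = y ⬝ᵥ S⁻¹ *ᵥ y := by
  have h_cancel : L⁻¹ *ᵥ (L *ᵥ y) = y := by
    rw [mulVec_mulVec, nonsing_inv_mul _ hL, one_mulVec]
  rw [Matrix.mul_inv_rev, Matrix.mul_inv_rev, ← mulVec_mulVec, ← mulVec_mulVec, h_cancel,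
    dotProduct_mulVec, ← transpose_nonsing_inv, vecMul_transpose, h_cancel]

lemma norm_mulVec_le_frobenius_norm_mul {m : Type*} [Fintype m] (M : Matrix m n ℝ) (x : n → ℝ) :
    ‖toLp 2 (M *ᵥ x)‖ ≤ ‖M‖ * ‖toLp 2 x‖ := by
  simpa only [← replicateCol_mulVec, frobenius_norm_replicateCol] using
    frobenius_norm_mul M (replicateCol Unit x)

lemma abs_dotProduct_mulVec_le {m : Type*} [Fintype m] (M : Matrix m n ℝ) (x : m → ℝ)
    (y : n → ℝ) : |x ⬝ᵥ M *ᵥ y| ≤ ‖M‖ * ‖toLp 2 x‖ * ‖toLp 2 y‖ := by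
  calc |x ⬝ᵥ M *ᵥ y| = |inner ℝ (toLp 2 x) (toLp 2 (M *ᵥ y))| := by
        rw [EuclideanSpace.inner_toLp_toLp, star_trivial, dotProduct_comm]
    _ ≤ ‖toLp 2 x‖ * ‖toLp 2 (M *ᵥ y)‖ := abs_real_inner_le_norm _ _
    _ ≤ ‖toLp 2 x‖ * (‖M‖ * ‖toLp 2 y‖) := by
        gcongr
        exact norm_mulVec_le_frobenius_norm_mul M y
    _ = ‖M‖ * ‖toLp 2 x‖ * ‖toLp 2 y‖ := by ring

lemma abs_dotProduct_mulVec_self_sub_le (P Q : Matrix n n ℝ) (y d : n → ℝ) :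
    |y ⬝ᵥ P *ᵥ y - (y - d) ⬝ᵥ Q *ᵥ (y - d)| ≤
      ‖P - Q‖ * ‖toLp 2 y‖ ^ 2 + ‖Q‖ * ‖toLp 2 d‖ * (2 * ‖toLp 2 y‖ + ‖toLp 2 d‖) := by
  have h_expand : y ⬝ᵥ P *ᵥ y - (y - d) ⬝ᵥ Q *ᵥ (y - d) =
      y ⬝ᵥ (P - Q) *ᵥ y + (d ⬝ᵥ Q *ᵥ y + y ⬝ᵥ Q *ᵥ d - d ⬝ᵥ Q *ᵥ d) := by
    simp only [sub_mulVec, mulVec_sub, dotProduct_sub, sub_dotProduct]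
    ring
  have h_linear : |d ⬝ᵥ Q *ᵥ y + y ⬝ᵥ Q *ᵥ d - d ⬝ᵥ Q *ᵥ d| ≤
      |d ⬝ᵥ Q *ᵥ y| + |y ⬝ᵥ Q *ᵥ d| + |d ⬝ᵥ Q *ᵥ d| :=
    (abs_sub _ _).trans (add_le_add_left (abs_add_le _ _) _)
  rw [h_expand]
  refine (abs_add_le _ _).trans ?_
  linarith [abs_dotProduct_mulVec_le (P - Q) y y, abs_dotProduct_mulVec_le Q d y,
    abs_dotProduct_mulVec_le Q y d, abs_dotProduct_mulVec_le Q d d]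

lemma differentiable_det (𝕜 : Type*) [NontriviallyNormedField 𝕜] [CompleteSpace 𝕜]
    [DecidableEq n] : Differentiable 𝕜 (det : Matrix n n 𝕜 → 𝕜) := by
  have (i j : n) : Differentiable 𝕜 fun M : Matrix n n 𝕜 => M i j :=
    (entryLinearMap 𝕜 𝕜 i j).toContinuousLinearMap.differentiable
  have h_det : (det : Matrix n n 𝕜 → 𝕜) = fun M =>
      ∑ σ : Equiv.Perm n, Equiv.Perm.sign σ • ∏ i, M (σ i) i :=
    funext det_apply
  rw [h_det]
  fun_prop

lemma differentiableAt_nonsing_inv {𝕜 : Type*} [RCLike 𝕜] [DecidableEq n] {S : Matrix n n 𝕜}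
    (hS : IsUnit S) : DifferentiableAt 𝕜 (fun M : Matrix n n 𝕜 => M⁻¹) S := by
  have : CompleteSpace (Matrix n n 𝕜) := FiniteDimensional.complete 𝕜 _
  have h_inverse : (fun M : Matrix n n 𝕜 => M⁻¹) = Ring.inverse :=
    funext nonsing_inv_eq_ringInverse
  rw [h_inverse]
  exact differentiableAt_inverse hS

end Matrix

section Gaussian

variable {p : ℕ}

lemma gaussianPi_map_add_left (a c : Fin p → ℝ) (S : Matrix (Fin p) (Fin p) ℝ) :
    (gaussianPi a S).map (fun x => c + x) = gaussianPi (c + a) S := by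
  conv_rhs => rw [gaussianPi, ← map_add_left_eq_self volume c]
  rw [← map_withDensity_comp (measurable_const_add c) (by fun_prop)]
  simp only [gaussianPi, Function.comp_def, add_sub_add_left_eq_sub]

lemma gaussianPi_map_mulVec (a : Fin p → ℝ) (S : Matrix (Fin p) (Fin p) ℝ)
    {L : Matrix (Fin p) (Fin p) ℝ} (hL : L.det ≠ 0) :
    (gaussianPi a S).map (fun x => L *ᵥ x) = gaussianPi (L *ᵥ a) (L * S * Lᵀ) := by
  have h_normalization : (√((2 * Real.pi) ^ p * S.det))⁻¹ =
      |L.det| * (√((2 * Real.pi) ^ p * (L * S * Lᵀ).det))⁻¹ := by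
    have h_det : (2 * Real.pi) ^ p * (L * S * Lᵀ).det =
        L.det ^ 2 * ((2 * Real.pi) ^ p * S.det) := by
      rw [det_mul, det_mul, det_transpose]
      ring
    rw [h_det, Real.sqrt_mul (sq_nonneg _), Real.sqrt_sq_eq_abs, mul_inv,
      mul_inv_cancel_left₀ (abs_ne_zero.mpr hL)]
  have h_volume : (volume : Measure (Fin p → ℝ)) =
      ENNReal.ofReal |L.det| • volume.map (fun x => L *ᵥ x) := by
    change _ = _ • volume.map (toLin' L)
    rw [Real.map_matrix_volume_pi_eq_smul_volume_pi hL, smul_smul,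
      ← ENNReal.ofReal_mul (abs_nonneg _), ← abs_mul, mul_inv_cancel₀ hL, abs_one,
      ENNReal.ofReal_one, one_smul]
  conv_rhs => rw [gaussianPi, h_volume]
  rw [withDensity_smul_measure, ← map_withDensity_comp (by fun_prop) (by fun_prop),
    ← Measure.map_smul, ← withDensity_smul _ (by fun_prop), gaussianPi]
  congr 2 with x
  simp only [Pi.smul_apply, Function.comp_apply, smul_eq_mul, ← mulVec_sub,
    mulVec_dotProduct_inv_mulVec_mulVec S hL.isUnit, h_normalization]
  rw [← ENNReal.ofReal_mul (abs_nonneg _), mul_assoc]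

lemma pi_gaussianReal_eq_gaussianPi :
    Measure.pi (fun _ : Fin p => gaussianReal 0 1) = gaussianPi 0 1 := by
  have h_density (x : Fin p → ℝ) : ∏ i, gaussianPDFReal 0 1 (x i) =
      (√((2 * Real.pi) ^ p * (1 : Matrix (Fin p) (Fin p) ℝ).det))⁻¹ *
        Real.exp (-((x - 0) ⬝ᵥ (1 : Matrix (Fin p) (Fin p) ℝ)⁻¹ *ᵥ (x - 0)) / 2) := by
    have h_sqrt : √((2 * Real.pi) ^ p) = √(2 * Real.pi) ^ p := by
      rw [← Real.sqrt_sq (pow_nonneg (Real.sqrt_nonneg _) p), ← pow_mul, mul_comm p, pow_mul,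
        Real.sq_sqrt (by positivity)]
    simp only [gaussianPDFReal, Finset.prod_mul_distrib, ← Real.exp_sum, Finset.prod_const,
      Finset.card_univ, Fintype.card_fin, NNReal.coe_one, mul_one, sub_zero, det_one, inv_one,
      one_mulVec, h_sqrt, inv_pow, dotProduct, ← Finset.sum_div, Finset.sum_neg_distrib, sq]
  simp_rw [gaussianReal_of_var_ne_zero 0 one_ne_zero, gaussianPDF_def]
  rw [pi_withDensity_ofReal (fun _ => integrable_gaussianPDFReal 0 1)
    fun _ => gaussianPDFReal_nonneg 0 1]
  simp_rw [h_density]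
  rfl

lemma isGaussian_gaussianPi (a : Fin p → ℝ) {S : Matrix (Fin p) (Fin p) ℝ} (hS : S.PosDef) :
    IsGaussian (gaussianPi a S) := by
  obtain ⟨L, hL, rfl⟩ := exists_det_ne_zero_eq_mul_transpose_of_posDef hS
  have h_std : IsGaussian (gaussianPi (0 : Fin p → ℝ) 1) :=
    pi_gaussianReal_eq_gaussianPi ▸ isGaussian_pi _
  have h_centered : IsGaussian (gaussianPi 0 (L * Lᵀ)) := by
    have h_map := gaussianPi_map_mulVec 0 1 hL
    rw [mulVec_zero, mul_one] at h_map
    exact h_map ▸ isGaussian_map (toLin' L).toContinuousLinearMap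
  have h_translate := gaussianPi_map_add_left 0 a (L * Lᵀ)
  rw [add_zero] at h_translate
  exact h_translate ▸ inferInstance

/-- The logarithm of the Lebesgue density of `gaussianPi 0 S`, for `S` of positive determinant.
Working with it turns the ratio of two Gaussian densities into a difference. -/
noncomputable def gaussianLogDensity (S : Matrix (Fin p) (Fin p) ℝ) (y : Fin p → ℝ) : ℝ :=
  -Real.log (√((2 * Real.pi) ^ p * S.det)) - y ⬝ᵥ S⁻¹ *ᵥ y / 2

@[fun_prop]
lemma continuous_gaussianLogDensity (S : Matrix (Fin p) (Fin p) ℝ) :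
    Continuous (gaussianLogDensity S) := by
  unfold gaussianLogDensity
  fun_prop

lemma gaussianPi_eq_withDensity_exp (a : Fin p → ℝ) {S : Matrix (Fin p) (Fin p) ℝ}
    (hS : 0 < S.det) :
    gaussianPi a S = volume.withDensity fun x =>
      ENNReal.ofReal (Real.exp (gaussianLogDensity S (x - a))) := by
  have h_normalization : 0 < √((2 * Real.pi) ^ p * S.det) := by positivity
  simp only [gaussianPi, gaussianLogDensity, sub_eq_add_neg _ (_ / (2 : ℝ)), Real.exp_add,
    Real.exp_neg, Real.exp_log h_normalization, neg_div]

lemma gaussianPi_eq_gaussianPi_withDensity (a b : Fin p → ℝ) {S T : Matrix (Fin p) (Fin p) ℝ}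
    (hS : 0 < S.det) (hT : 0 < T.det) :
    gaussianPi b T = (gaussianPi a S).withDensity fun x => ENNReal.ofReal
      (Real.exp (-(gaussianLogDensity S (x - a) - gaussianLogDensity T (x - b)))) := by
  rw [gaussianPi_eq_withDensity_exp a hS, gaussianPi_eq_withDensity_exp b hT,
    ← withDensity_mul _ (by fun_prop) (by fun_prop)]
  congr with x
  rw [Pi.mul_apply, ← ENNReal.ofReal_mul (Real.exp_pos _).le, ← Real.exp_add]
  congr 2
  ring

end Gaussian

section Distance

variable {p : ℕ} {S : Matrix (Fin p) (Fin p) ℝ}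

lemma integrable_one_add_norm_sq_gaussianPi (hS : S.PosDef) :
    Integrable (fun y => (1 + ‖toLp 2 y‖) ^ 2) (gaussianPi 0 S) := by
  have := isGaussian_gaussianPi 0 hS
  have h_memLp : MemLp (toLp 2) 2 (gaussianPi 0 S) :=
    (PiLp.continuousLinearEquiv 2 ℝ fun _ : Fin p => ℝ).symm.toContinuousLinearMap.comp_memLp'
      IsGaussian.memLp_two_id
  exact ((memLp_const (1 : ℝ)).add h_memLp.norm).integrable_sq

lemma tvDist_gaussianPi_le_integral (a b : Fin p → ℝ) {T : Matrix (Fin p) (Fin p) ℝ}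
    (hS : S.PosDef) (hT : T.PosDef)
    (h_int : Integrable
      (fun y => gaussianLogDensity S y - gaussianLogDensity T (y - (b - a))) (gaussianPi 0 S)) :
    tvDist (gaussianPi a S) (gaussianPi b T) ≤
      ∫ y, |gaussianLogDensity S y - gaussianLogDensity T (y - (b - a))| ∂gaussianPi 0 S := by
  have := isGaussian_gaussianPi a hS
  have := isGaussian_gaussianPi b hT
  set w : (Fin p → ℝ) → ℝ := fun x => gaussianLogDensity S (x - a) - gaussianLogDensity T (x - b)
    with hw
  have h_translate : MeasurePreserving (a + ·) (gaussianPi 0 S) (gaussianPi a S) :=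
    ⟨measurable_const_add a, by rw [gaussianPi_map_add_left, add_zero]⟩
  have hw_translate (y : Fin p → ℝ) :
      w (a + y) = gaussianLogDensity S y - gaussianLogDensity T (y - (b - a)) := by
    simp only [hw, add_sub_cancel_left, sub_sub_eq_add_sub, add_comm y a]
  simp_rw [← hw_translate] at h_int ⊢
  have hw_int : Integrable w (gaussianPi a S) :=
    (h_translate.integrable_comp_emb (measurableEmbedding_addLeft a)).mp h_int
  have h_density := gaussianPi_eq_gaussianPi_withDensity a b hS.det_pos hT.det_pos
  have : IsProbabilityMeasure
      ((gaussianPi a S).withDensity fun x => ENNReal.ofReal (Real.exp (-w x))) :=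
    h_density ▸ inferInstance
  rw [h_translate.integral_comp (measurableEmbedding_addLeft a) (fun x => |w x|), h_density]
  exact tvDist_withDensity_exp_neg_le hw_int

lemma gaussianLogDensity_sub_gaussianLogDensity {T : Matrix (Fin p) (Fin p) ℝ} (hS : 0 < S.det)
    (hT : 0 < T.det) (y z : Fin p → ℝ) :
    gaussianLogDensity S y - gaussianLogDensity T z =
      ((Real.log T.det - Real.log S.det) - (y ⬝ᵥ S⁻¹ *ᵥ y - z ⬝ᵥ T⁻¹ *ᵥ z)) / 2 := by
  have h_log {R : Matrix (Fin p) (Fin p) ℝ} (hR : 0 < R.det) :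
      Real.log (√((2 * Real.pi) ^ p * R.det)) =
        (Real.log ((2 * Real.pi) ^ p) + Real.log R.det) / 2 := by
    rw [Real.log_sqrt (by positivity), Real.log_mul (by positivity) hR.ne']
  rw [gaussianLogDensity, gaussianLogDensity, h_log hS, h_log hT]
  ring

lemma abs_gaussianLogDensity_sub_le {T : Matrix (Fin p) (Fin p) ℝ} (hS : 0 < S.det)
    (hT : 0 < T.det) (y : Fin p → ℝ) {d : Fin p → ℝ} (hd : ‖toLp 2 d‖ ≤ 1) :
    |gaussianLogDensity S y - gaussianLogDensity T (y - d)| ≤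
      (|Real.log T.det - Real.log S.det| + ‖T⁻¹ - S⁻¹‖ + ‖T⁻¹‖ * ‖toLp 2 d‖) *
        (1 + ‖toLp 2 y‖) ^ 2 := by
  set r := ‖toLp 2 y‖
  have hr : 0 ≤ r := norm_nonneg _
  have h_const : 1 ≤ (1 + r) ^ 2 := by nlinarith
  have h_quad : r ^ 2 ≤ (1 + r) ^ 2 := by nlinarith
  have h_shift : 2 * r + ‖toLp 2 d‖ ≤ (1 + r) ^ 2 := by nlinarith
  calc |gaussianLogDensity S y - gaussianLogDensity T (y - d)|
      ≤ |Real.log T.det - Real.log S.det - (y ⬝ᵥ S⁻¹ *ᵥ y - (y - d) ⬝ᵥ T⁻¹ *ᵥ (y - d))| := by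
        rw [gaussianLogDensity_sub_gaussianLogDensity hS hT, abs_div, abs_two]
        exact half_le_self (abs_nonneg _)
    _ ≤ |Real.log T.det - Real.log S.det| * 1 + (‖T⁻¹ - S⁻¹‖ * r ^ 2 +
          ‖T⁻¹‖ * ‖toLp 2 d‖ * (2 * r + ‖toLp 2 d‖)) := by
        rw [mul_one, norm_sub_rev T⁻¹]
        exact (abs_sub _ _).trans
          (add_le_add_right (abs_dotProduct_mulVec_self_sub_le S⁻¹ T⁻¹ y d) _)
    _ ≤ |Real.log T.det - Real.log S.det| * (1 + r) ^ 2 + (‖T⁻¹ - S⁻¹‖ * (1 + r) ^ 2 +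
          ‖T⁻¹‖ * ‖toLp 2 d‖ * (1 + r) ^ 2) := by gcongr
    _ = _ := by ring

lemma exists_eventually_abs_gaussianLogDensity_sub_le (hS : 0 < S.det) :
    ∃ K, ∀ᶠ T in 𝓝 S, ∀ y d : Fin p → ℝ, ‖toLp 2 d‖ ≤ 1 →
      |gaussianLogDensity S y - gaussianLogDensity T (y - d)| ≤
        K * (‖toLp 2 d‖ + ‖T - S‖) * (1 + ‖toLp 2 y‖) ^ 2 := by
  have h_diff_inv : DifferentiableAt ℝ (fun T : Matrix (Fin p) (Fin p) ℝ => T⁻¹) S :=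
    differentiableAt_nonsing_inv ((isUnit_iff_isUnit_det S).mpr hS.ne'.isUnit)
  have h_diff_log : DifferentiableAt ℝ (fun T : Matrix (Fin p) (Fin p) ℝ => Real.log T.det) S :=
    (differentiable_det ℝ S).log hS.ne'
  obtain ⟨K₁, hK₁, h_log⟩ := h_diff_log.isBigO_sub.exists_nonneg
  obtain ⟨K₂, hK₂, h_inv⟩ := h_diff_inv.isBigO_sub.exists_nonneg
  have h_inv_bdd : ∀ᶠ T in 𝓝 S, ‖T⁻¹‖ < ‖S⁻¹‖ + 1 :=
    h_diff_inv.continuousAt.norm.eventually_lt_const (lt_add_one _)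
  have h_det : ∀ᶠ T : Matrix (Fin p) (Fin p) ℝ in 𝓝 S, 0 < T.det :=
    (differentiable_det ℝ S).continuousAt.eventually_const_lt hS
  refine ⟨K₁ + K₂ + (‖S⁻¹‖ + 1), ?_⟩
  filter_upwards [h_log.bound, h_inv.bound, h_inv_bdd, h_det] with T hT_log hT_inv hT_bdd hT y d hd
  refine (abs_gaussianLogDensity_sub_le hS hT y hd).trans ?_
  gcongr
  calc |Real.log T.det - Real.log S.det| + ‖T⁻¹ - S⁻¹‖ + ‖T⁻¹‖ * ‖toLp 2 d‖
      ≤ K₁ * ‖T - S‖ + K₂ * ‖T - S‖ + (‖S⁻¹‖ + 1) * ‖toLp 2 d‖ := by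
        gcongr
        exact hT_log
    _ ≤ (K₁ + K₂ + (‖S⁻¹‖ + 1)) * (‖toLp 2 d‖ + ‖T - S‖) := by
        have h_cross : 0 ≤ (K₁ + K₂) * ‖toLp 2 d‖ + (‖S⁻¹‖ + 1) * ‖T - S‖ := by positivity
        linarith

lemma exists_tvDist_gaussianPi_le_of_lt (hS : S.PosDef) :
    ∃ C, ∃ ε > 0, ∀ (a b : Fin p → ℝ) (T : Matrix (Fin p) (Fin p) ℝ), T.PosDef →
      ‖toLp 2 (b - a)‖ + ‖T - S‖ < ε →
      tvDist (gaussianPi a S) (gaussianPi b T) ≤ C * (‖toLp 2 (b - a)‖ + ‖T - S‖) := by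
  obtain ⟨K, hK⟩ := exists_eventually_abs_gaussianLogDensity_sub_le hS.det_pos
  obtain ⟨ε, hε, h_near⟩ := Metric.eventually_nhds_iff.mp hK
  refine ⟨K * ∫ y, (1 + ‖toLp 2 y‖) ^ 2 ∂gaussianPi 0 S, min ε 1, lt_min hε one_pos,
    fun a b T hT h_lt => ?_⟩
  set δ := ‖toLp 2 (b - a)‖ + ‖T - S‖ with hδ
  have h_bound (y : Fin p → ℝ) :
      |gaussianLogDensity S y - gaussianLogDensity T (y - (b - a))| ≤
        K * δ * (1 + ‖toLp 2 y‖) ^ 2 := by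
    refine h_near ?_ y (b - a) ?_
    · rw [dist_eq_norm]
      linarith [hδ, norm_nonneg (toLp 2 (b - a)), min_le_left ε 1]
    · linarith [hδ, norm_nonneg (T - S), min_le_right ε 1]
  have h_bound_int : Integrable (fun y => K * δ * (1 + ‖toLp 2 y‖) ^ 2) (gaussianPi 0 S) :=
    (integrable_one_add_norm_sq_gaussianPi hS).const_mul _
  have h_int : Integrable (fun y => gaussianLogDensity S y - gaussianLogDensity T (y - (b - a)))
      (gaussianPi 0 S) :=
    h_bound_int.mono' (by fun_prop) (.of_forall h_bound)
  calc tvDist (gaussianPi a S) (gaussianPi b T)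
      ≤ ∫ y, |gaussianLogDensity S y - gaussianLogDensity T (y - (b - a))| ∂gaussianPi 0 S :=
        tvDist_gaussianPi_le_integral a b hS hT h_int
    _ ≤ ∫ y, K * δ * (1 + ‖toLp 2 y‖) ^ 2 ∂gaussianPi 0 S :=
        integral_mono h_int.abs h_bound_int h_bound
    _ = K * (∫ y, (1 + ‖toLp 2 y‖) ^ 2 ∂gaussianPi 0 S) * δ := by
        rw [integral_const_mul]
        ring

lemma frobNorm_eq_norm (B : Matrix (Fin p) (Fin p) ℝ) : frobNorm B = ‖B‖ := by
  simp only [frobNorm, frobenius_norm_def, Real.sqrt_eq_rpow, Real.norm_eq_abs, Real.rpow_two,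
    sq_abs]

end Distance

/-- for symmetric positive definite Σ₁ there is a constant C(Σ₁) such that
‖N(a,Σ₁) - N(b,Σ₂)‖ ≤ C(Σ₁)(‖b - a‖_E + ‖Σ₂ - Σ₁‖_F) for all a, b and all symmetric
positive definite Σ₂. -/
theorem stmt14 {p : ℕ} (S1 : Matrix (Fin p) (Fin p) ℝ) (hS1 : S1.PosDef) :
    ∃ C : ℝ, ∀ (a b : Fin p → ℝ) (S2 : Matrix (Fin p) (Fin p) ℝ), S2.PosDef →
      tvDist (gaussianPi a S1) (gaussianPi b S2)
        ≤ C * (Real.sqrt (∑ k, (b k - a k) ^ 2) + frobNorm (S2 - S1)) := by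
  obtain ⟨C, ε, hε, h_near⟩ := exists_tvDist_gaussianPi_le_of_lt hS1
  refine ⟨max C ε⁻¹, fun a b S2 hS2 => ?_⟩
  have h_norm : √(∑ k, (b k - a k) ^ 2) = ‖toLp 2 (b - a)‖ := by
    simp [EuclideanSpace.norm_eq]
  rw [h_norm, frobNorm_eq_norm]
  rcases lt_or_ge (‖toLp 2 (b - a)‖ + ‖S2 - S1‖) ε with h_lt | h_ge
  · exact (h_near a b S2 hS2 h_lt).trans (by gcongr; exact le_max_left _ _)
  · have := isGaussian_gaussianPi a hS1
    have := isGaussian_gaussianPi b hS2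
    calc tvDist (gaussianPi a S1) (gaussianPi b S2) ≤ 1 := tvDist_le_one
      _ = ε⁻¹ * ε := (inv_mul_cancel₀ hε.ne').symm
      _ ≤ max C ε⁻¹ * (‖toLp 2 (b - a)‖ + ‖S2 - S1‖) := by
        gcongr
        exact le_max_right _ _
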